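/- Assume the diagonal entries of the arrow matrix A are ordered d₁ ≤ d₂ ≤ … ≤ d_{n−1}. Define the interval 𝓘 = (0, +∞) if all the d_i are equal, and 𝓘 = (0, μ₀) with μ₀ = (1/2)·min{|d_i − d_j| : d_i ≠ d_j} otherwise. Fix ε ∈ 𝓘 and let λ₁ ≤ … ≤ λₙ denote the eigenvalues of A in nondecreasing order. If 𝐚 ≥ (1/ε)·Σ_{i=1}^{n−1}|a_i|² + (n−1)·Σ_{i=1}^{n−1}|d_i| + (n−2)ε, then |d_α − λ_α| < ε for every 1 ≤ α ≤ n−1, and 0 ≤ λₙ − 𝐚 < (n−1)ε. -/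

import Mathlib

open Filter

/-- The `(n+1) × (n+1)` Hermitian "arrow" matrix with diagonal `d₁, …, dₙ, 𝐚`, last column
`a₁, …, aₙ` and last row `conj a₁, …, conj aₙ`. -/
noncomputable def arrowMatrix {n : ℕ} (d : Fin n → ℝ) (a : Fin n → ℂ) (aa : ℝ) :
    Matrix (Fin (n + 1)) (Fin (n + 1)) ℂ :=
  Matrix.of fun i j =>
    Fin.lastCases
      (Fin.lastCases ((aa : ℂ)) (fun β => (starRingEnd ℂ) (a β)) j)
      (fun α => Fin.lastCases (a α) (fun β => if α = β then (d α : ℂ) else 0) j)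
      i

/-!
By Courant–Fischer, the `α`-th eigenvalue is bounded above by testing the quadratic form of the
arrow matrix on the span of `e₁, …, e_α`, where it is just `∑ d_i |v_i|²`, and below by testing on
the span of `e_α, …, e_{n+1}`. On the latter, Young's inequality
`-2 Re (conj v_i · a_i v_{n+1}) ≤ ε |v_i|² + |a_i|² |v_{n+1}|² / ε` absorbs the off-diagonal terms
at the cost of lowering each `d_i` by `ε`, and the growth condition makes the remaining coefficient
`𝐚 - (∑ |a_i|²) / ε` of `|v_{n+1}|²` exceed `d_α - ε`. Since the eigenvalues sum to `∑ d_i + 𝐚`,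
the resulting bounds `d_α - ε < λ_α ≤ d_α` for the first `n` of them control the last one.
-/

open Matrix Module
open scoped InnerProductSpace

section MonotoneWeights

variable {ι : Type*} [Fintype ι] [LinearOrder ι] {d w : ι → ℝ} {k : ι}

theorem sum_mul_le_mul_sum_of_monotone (hd : Monotone d) (hw : ∀ i, 0 ≤ w i)
    (hk : ∀ i > k, w i = 0) : ∑ i, d i * w i ≤ d k * ∑ i, w i := by
  rw [Finset.mul_sum]
  refine Finset.sum_le_sum fun i _ => ?_
  rcases le_or_gt i k with hi | hi
  · exact mul_le_mul_of_nonneg_right (hd hi) (hw i)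
  · simp [hk i hi]

theorem mul_sum_le_sum_mul_of_monotone (hd : Monotone d) (hw : ∀ i, 0 ≤ w i)
    (hk : ∀ i < k, w i = 0) : d k * ∑ i, w i ≤ ∑ i, d i * w i := by
  rw [Finset.mul_sum]
  refine Finset.sum_le_sum fun i _ => ?_
  rcases le_or_gt k i with hi | hi
  · exact mul_le_mul_of_nonneg_right (hd hi) (hw i)
  · simp [hk i hi]

end MonotoneWeights

section InnerProductSpace

variable {𝕜 E : Type*} [RCLike 𝕜] [NormedAddCommGroup E] [InnerProductSpace 𝕜 E]

theorem neg_two_mul_re_inner_le (x y : E) {ε : ℝ} (hε : 0 < ε) :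
    -(2 * RCLike.re ⟪x, y⟫_𝕜) ≤ ε * ‖x‖ ^ 2 + 1 / ε * ‖y‖ ^ 2 := by
  have hsq : ‖(ε : 𝕜) • x + y‖ ^ 2
      = ε * (ε * ‖x‖ ^ 2 + 1 / ε * ‖y‖ ^ 2 + 2 * RCLike.re ⟪x, y⟫_𝕜) := by
    rw [norm_add_sq (𝕜 := 𝕜), norm_smul, inner_smul_left, RCLike.conj_ofReal, RCLike.re_ofReal_mul,
      RCLike.norm_of_nonneg hε.le]
    field_simp
    ring
  have hnonneg := nonneg_of_mul_nonneg_right (hsq ▸ sq_nonneg _) hε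
  linarith

theorem exists_ne_zero_forall_inner_eq_zero {κ : Type*} [Fintype κ] (g : κ → E)
    (hκ : Fintype.card κ < finrank 𝕜 E) : ∃ v ≠ 0, ∀ k, ⟪g k, v⟫_𝕜 = 0 := by
  have : FiniteDimensional 𝕜 E := .of_finrank_pos (Nat.zero_lt_of_lt hκ)
  let L : E →ₗ[𝕜] κ → 𝕜 := LinearMap.pi fun k => innerₛₗ 𝕜 (g k)
  have hker : LinearMap.ker L ≠ ⊥ := LinearMap.ker_ne_bot_of_finrank_lt (by simpa using hκ)
  obtain ⟨v, hv, hv0⟩ := Submodule.exists_mem_ne_zero_of_ne_bot hker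
  exact ⟨v, hv0, congrFun (LinearMap.mem_ker.1 hv)⟩

variable {ι : Type*} [Fintype ι] {T : E →ₗ[𝕜] E} {b : OrthonormalBasis ι 𝕜 E} {μ : ι → ℝ}

theorem re_inner_map_self_eq_sum (hb : ∀ i, T (b i) = (μ i : 𝕜) • b i) (v : E) :
    RCLike.re ⟪v, T v⟫_𝕜 = ∑ i, μ i * ‖⟪b i, v⟫_𝕜‖ ^ 2 := by
  have hTv : T v = ∑ i, ⟪b i, v⟫_𝕜 • (μ i : 𝕜) • b i := by
    conv_lhs => rw [← b.sum_repr' v, map_sum]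
    simp only [map_smul, hb]
  rw [hTv, inner_sum, map_sum]
  refine Finset.sum_congr rfl fun i _ => ?_
  rw [smul_comm, inner_smul_right, inner_smul_right, RCLike.re_ofReal_mul,
    inner_mul_symm_re_eq_norm, norm_mul, norm_inner_symm v, sq]

variable [LinearOrder ι]

theorem exists_ne_zero_re_inner_map_self_le (hb : ∀ i, T (b i) = (μ i : 𝕜) • b i)
    (hμ : Monotone μ) (f : ι → E) (k : ι) :
    ∃ v ≠ 0, (∀ j < k, ⟪f j, v⟫_𝕜 = 0) ∧ RCLike.re ⟪v, T v⟫_𝕜 ≤ μ k * ‖v‖ ^ 2 := by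
  -- One linear condition for each index other than `k`: `v ⟂ f i` below `k`, `v ⟂ b i` above.
  obtain ⟨v, hv0, hv⟩ := exists_ne_zero_forall_inner_eq_zero (𝕜 := 𝕜)
    (fun i : {i // i ≠ k} => if i.1 < k then f i else b i) <| by
      rw [finrank_eq_card_basis b.toBasis]
      exact Fintype.card_subtype_lt (x := k) (by simp)
  have hbv (i : ι) (hi : i > k) : ⟪b i, v⟫_𝕜 = 0 := by
    simpa [hi.not_gt] using hv ⟨i, hi.ne'⟩
  refine ⟨v, hv0, fun j hj => by simpa [hj] using hv ⟨j, hj.ne⟩, ?_⟩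
  rw [re_inner_map_self_eq_sum hb, ← b.sum_sq_norm_inner_right]
  exact sum_mul_le_mul_sum_of_monotone hμ (fun i => sq_nonneg _) fun i hi => by simp [hbv i hi]

theorem exists_ne_zero_le_re_inner_map_self (hb : ∀ i, T (b i) = (μ i : 𝕜) • b i)
    (hμ : Monotone μ) (f : ι → E) (k : ι) :
    ∃ v ≠ 0, (∀ j > k, ⟪f j, v⟫_𝕜 = 0) ∧ μ k * ‖v‖ ^ 2 ≤ RCLike.re ⟪v, T v⟫_𝕜 := by
  obtain ⟨v, hv0, hv, hle⟩ := exists_ne_zero_re_inner_map_self_le (ι := ιᵒᵈ) (T := -T)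
    (b := b.reindex OrderDual.toDual) (μ := fun i => -μ (OrderDual.ofDual i))
    (fun i => by simp [hb]) (fun i j hij => neg_le_neg (hμ hij)) (f ∘ OrderDual.ofDual)
    (OrderDual.toDual k)
  exact ⟨v, hv0, fun j hj => hv (OrderDual.toDual j) hj, by simpa using hle⟩

end InnerProductSpace

section HermitianMatrix

variable {𝕜 ι κ : Type*} [RCLike 𝕜] [Fintype ι] [DecidableEq ι] [Fintype κ] {A : Matrix ι ι 𝕜}

theorem exists_orthonormalBasis_of_eq_eigenvalues (hA : A.IsHermitian) {μ : κ → ℝ} {e : κ ≃ ι}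
    (he : ∀ k, μ k = hA.eigenvalues (e k)) :
    ∃ b : OrthonormalBasis κ 𝕜 (EuclideanSpace 𝕜 ι),
      ∀ k, toEuclideanLin A (b k) = (μ k : 𝕜) • b k := by
  refine ⟨hA.eigenvectorBasis.reindex e.symm, fun k => ?_⟩
  ext i
  simpa [he, RCLike.real_smul_eq_coe_mul] using congrFun (hA.mulVec_eigenvectorBasis (e k)) i

theorem trace_eq_sum_of_eq_eigenvalues (hA : A.IsHermitian) {μ : κ → ℝ} {e : κ ≃ ι}
    (he : ∀ k, μ k = hA.eigenvalues (e k)) : A.trace = ((∑ k, μ k : ℝ) : 𝕜) := by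
  rw [hA.trace_eq_sum_eigenvalues, ← e.sum_comp]
  simp only [he, RCLike.ofReal_sum]

end HermitianMatrix

section ArrowMatrix

variable {n : ℕ} {d : Fin n → ℝ} {a : Fin n → ℂ} {aa : ℝ}

theorem trace_arrowMatrix : (arrowMatrix d a aa).trace = ((∑ i, d i + aa : ℝ) : ℂ) := by
  simp [trace, Fin.sum_univ_castSucc, arrowMatrix]

theorem arrowMatrix_mulVec_castSucc (v : Fin (n + 1) → ℂ) (i : Fin n) :
    (arrowMatrix d a aa *ᵥ v) i.castSucc = d i * v i.castSucc + a i * v (Fin.last n) := by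
  simp [mulVec, dotProduct, Fin.sum_univ_castSucc, arrowMatrix]

theorem arrowMatrix_mulVec_last (v : Fin (n + 1) → ℂ) :
    (arrowMatrix d a aa *ᵥ v) (Fin.last n)
      = ∑ i, starRingEnd ℂ (a i) * v i.castSucc + aa * v (Fin.last n) := by
  simp [mulVec, dotProduct, Fin.sum_univ_castSucc, arrowMatrix]

theorem re_inner_arrowMatrix (v : EuclideanSpace ℂ (Fin (n + 1))) :
    RCLike.re ⟪v, toEuclideanLin (arrowMatrix d a aa) v⟫_ℂ
      = ∑ i : Fin n, (d i * ‖v i.castSucc‖ ^ 2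
        + 2 * RCLike.re ⟪v i.castSucc, a i * v (Fin.last n)⟫_ℂ) + aa * ‖v (Fin.last n)‖ ^ 2 := by
  have hdiag (x : ℝ) (z : ℂ) : RCLike.re ⟪z, x * z⟫_ℂ = x * ‖z‖ ^ 2 := by
    rw [← Complex.real_smul, inner_smul_right_eq_smul, RCLike.smul_re, inner_self_eq_norm_sq]
  have hsymm (i : Fin n) : RCLike.re ⟪v (Fin.last n), starRingEnd ℂ (a i) * v i.castSucc⟫_ℂ
      = RCLike.re ⟪v i.castSucc, a i * v (Fin.last n)⟫_ℂ := by
    rw [← inner_re_symm, ← smul_eq_mul, inner_smul_left, starRingEnd_self_apply,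
      ← inner_smul_right, smul_eq_mul]
  simp only [PiLp.inner_apply, Fin.sum_univ_castSucc, toLpLin_apply, arrowMatrix_mulVec_castSucc,
    arrowMatrix_mulVec_last, inner_add_right, inner_sum, map_add, map_sum, hdiag, hsymm,
    Finset.sum_add_distrib, ← Finset.mul_sum]
  ring

variable {v : EuclideanSpace ℂ (Fin (n + 1))} {α : Fin n} {ε : ℝ}

theorem re_inner_arrowMatrix_of_last_eq_zero (hlast : v (Fin.last n) = 0) :
    RCLike.re ⟪v, toEuclideanLin (arrowMatrix d a aa) v⟫_ℂ
      = ∑ i : Fin n, d i * ‖v i.castSucc‖ ^ 2 := by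
  rw [re_inner_arrowMatrix]
  simp [hlast]

theorem sum_sub_mul_norm_sq_le_re_inner_arrowMatrix (hε : 0 < ε) :
    ∑ i, (d i - ε) * ‖v i.castSucc‖ ^ 2 + (aa - 1 / ε * ∑ i, ‖a i‖ ^ 2) * ‖v (Fin.last n)‖ ^ 2
      ≤ RCLike.re ⟪v, toEuclideanLin (arrowMatrix d a aa) v⟫_ℂ := by
  have hcross (i : Fin n) : -(2 * RCLike.re ⟪v i.castSucc, a i * v (Fin.last n)⟫_ℂ)
      ≤ ε * ‖v i.castSucc‖ ^ 2 + 1 / ε * (‖a i‖ ^ 2 * ‖v (Fin.last n)‖ ^ 2) := by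
    simpa only [norm_mul, mul_pow] using
      neg_two_mul_re_inner_le (𝕜 := ℂ) (v i.castSucc) (a i * v (Fin.last n)) hε
  have hsum := Finset.sum_le_sum fun i (_ : i ∈ Finset.univ) => hcross i
  simp only [Finset.sum_neg_distrib, Finset.sum_add_distrib, ← Finset.mul_sum,
    ← Finset.sum_mul] at hsum
  simp only [re_inner_arrowMatrix, Finset.sum_add_distrib, sub_mul, Finset.sum_sub_distrib,
    ← Finset.mul_sum]
  linarith

theorem re_inner_arrowMatrix_le (hd : Monotone d) (hv : ∀ j > α.castSucc, v j = 0) :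
    RCLike.re ⟪v, toEuclideanLin (arrowMatrix d a aa) v⟫_ℂ ≤ d α * ‖v‖ ^ 2 := by
  have hlast : v (Fin.last n) = 0 := hv _ α.castSucc_lt_last
  rw [re_inner_arrowMatrix_of_last_eq_zero hlast, EuclideanSpace.norm_sq_eq, Fin.sum_univ_castSucc,
    hlast, norm_zero, zero_pow two_ne_zero, add_zero]
  exact sum_mul_le_mul_sum_of_monotone hd (fun i => sq_nonneg _) fun i hi => by
    simp [hv i.castSucc (Fin.castSucc_lt_castSucc_iff.2 hi)]

theorem sub_mul_norm_sq_lt_re_inner_arrowMatrix (hd : Monotone d) (hε : 0 < ε)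
    (hgap : d α + 1 / ε * ∑ i, ‖a i‖ ^ 2 < aa + ε) (hv0 : v ≠ 0)
    (hv : ∀ j < α.castSucc, v j = 0) :
    (d α - ε) * ‖v‖ ^ 2 < RCLike.re ⟪v, toEuclideanLin (arrowMatrix d a aa) v⟫_ℂ := by
  have hnorm : ‖v‖ ^ 2 = ∑ i : Fin n, ‖v i.castSucc‖ ^ 2 + ‖v (Fin.last n)‖ ^ 2 := by
    rw [EuclideanSpace.norm_sq_eq, Fin.sum_univ_castSucc]
  have hdiag : d α * ∑ i : Fin n, ‖v i.castSucc‖ ^ 2 ≤ ∑ i : Fin n, d i * ‖v i.castSucc‖ ^ 2 :=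
    mul_sum_le_sum_mul_of_monotone hd (fun i => sq_nonneg _) fun i hi => by
      simp [hv i.castSucc (Fin.castSucc_lt_castSucc_iff.2 hi)]
  by_cases hlast : v (Fin.last n) = 0
  · rw [hlast, norm_zero, zero_pow two_ne_zero, add_zero] at hnorm
    rw [← hnorm] at hdiag
    have hpos : 0 < ε * ‖v‖ ^ 2 := by positivity
    rw [re_inner_arrowMatrix_of_last_eq_zero hlast]
    linarith
  · have hpos : 0 < (aa + ε - (d α + 1 / ε * ∑ i, ‖a i‖ ^ 2)) * ‖v (Fin.last n)‖ ^ 2 :=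
      mul_pos (sub_pos.2 hgap) (by positivity)
    refine lt_of_lt_of_le ?_ (sum_sub_mul_norm_sq_le_re_inner_arrowMatrix hε)
    simp only [sub_mul, Finset.sum_sub_distrib, ← Finset.mul_sum, hnorm]
    linarith

variable {b : OrthonormalBasis (Fin (n + 1)) ℂ (EuclideanSpace ℂ (Fin (n + 1)))}
  {lam : Fin (n + 1) → ℝ}

theorem eigenvalue_castSucc_le (hd : Monotone d) (hlam : Monotone lam)
    (hb : ∀ k, toEuclideanLin (arrowMatrix d a aa) (b k) = (lam k : ℂ) • b k) :
    lam α.castSucc ≤ d α := by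
  obtain ⟨v, hv0, hv, hle⟩ := exists_ne_zero_le_re_inner_map_self hb hlam
    (fun j => EuclideanSpace.single j 1) α.castSucc
  simp only [EuclideanSpace.inner_single_left, map_one, one_mul] at hv
  exact le_of_mul_le_mul_right (hle.trans (re_inner_arrowMatrix_le hd hv)) (by positivity)

theorem sub_lt_eigenvalue_castSucc (hd : Monotone d) (hlam : Monotone lam)
    (hb : ∀ k, toEuclideanLin (arrowMatrix d a aa) (b k) = (lam k : ℂ) • b k) (hε : 0 < ε)
    (hgap : d α + 1 / ε * ∑ i, ‖a i‖ ^ 2 < aa + ε) :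
    d α - ε < lam α.castSucc := by
  obtain ⟨v, hv0, hv, hle⟩ := exists_ne_zero_re_inner_map_self_le hb hlam
    (fun j => EuclideanSpace.single j 1) α.castSucc
  simp only [EuclideanSpace.inner_single_left, map_one, one_mul] at hv
  have hlt := sub_mul_norm_sq_lt_re_inner_arrowMatrix hd hε hgap hv0 hv
  exact lt_of_mul_lt_mul_right (hlt.trans_le hle) (by positivity)

end ArrowMatrix

theorem add_lt_add_of_add_mul_sum_abs_le {n : ℕ} {d : Fin n → ℝ} {s aa ε : ℝ} (hε : 0 < ε)
    (hgrow : s + n * ∑ i, |d i| + (n - 1) * ε ≤ aa) (α : Fin n) : d α + s < aa + ε := by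
  have hn : (1 : ℝ) ≤ n := by exact_mod_cast α.pos
  have hd : d α ≤ n * ∑ i, |d i| := calc
    d α ≤ |d α| := le_abs_self _
    _ ≤ ∑ i, |d i| :=
      Finset.single_le_sum (f := fun i => |d i|) (fun _ _ => abs_nonneg _) (Finset.mem_univ α)
    _ ≤ n * ∑ i, |d i| := le_mul_of_one_le_left (by positivity) hn
  have hε' : 0 ≤ (n - 1) * ε := mul_nonneg (sub_nonneg.2 hn) hε.le
  linarith

theorem stmt11_general {n : ℕ} (hn : 1 ≤ n) (d : Fin n → ℝ) (a : Fin n → ℂ) (aa : ℝ)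
    (hd : Monotone d)
    (hA : (arrowMatrix d a aa).IsHermitian)
    (lam : Fin (n + 1) → ℝ) (hmono : Monotone lam)
    (hperm : ∃ e : Equiv.Perm (Fin (n + 1)), ∀ k, lam k = hA.eigenvalues (e k))
    (ε : ℝ) (hε : 0 < ε)
    (hgap : ∀ α, d α + 1 / ε * ∑ i, ‖a i‖ ^ 2 < aa + ε) :
    (∀ α : Fin n, |d α - lam α.castSucc| < ε) ∧
    0 ≤ lam (Fin.last n) - aa ∧
    lam (Fin.last n) - aa < n * ε := by
  obtain ⟨e, he⟩ := hperm
  obtain ⟨b, hb⟩ := exists_orthonormalBasis_of_eq_eigenvalues hA he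
  have hupper (α : Fin n) : lam α.castSucc ≤ d α := eigenvalue_castSucc_le hd hmono hb
  have hlower (α : Fin n) : d α - ε < lam α.castSucc :=
    sub_lt_eigenvalue_castSucc hd hmono hb hε (hgap α)
  have htrace : ∑ k, lam k = ∑ i, d i + aa :=
    Complex.ofReal_injective ((trace_eq_sum_of_eq_eigenvalues hA he).symm.trans trace_arrowMatrix)
  rw [Fin.sum_univ_castSucc] at htrace
  have hsum_upper : ∑ α : Fin n, lam α.castSucc ≤ ∑ α, d α :=
    Finset.sum_le_sum fun α _ => hupper α
  have hsum_lower : ∑ α, d α - n * ε < ∑ α : Fin n, lam α.castSucc := by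
    simpa using Finset.sum_lt_sum_of_nonempty ⟨⟨0, hn⟩, Finset.mem_univ _⟩ fun α _ => hlower α
  exact ⟨fun α => abs_lt.2 ⟨by linarith [hupper α], by linarith [hlower α]⟩,
    by linarith, by linarith⟩

/-- Lemma 10.3: ordered diagonal entries `d₁ ≤ … ≤ d_{n−1}`; `ε` lies in `𝓘 = (0,∞)` if all
`d_i` are equal, and in `𝓘 = (0, μ₀)` with `μ₀ = ½ min{|d_i − d_j| : d_i ≠ d_j}` otherwise.
If `𝐚` satisfies the quadratic growth condition, then `|d_α − λ_α| < ε` for `α < n` and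
`0 ≤ λₙ − 𝐚 < (n−1)ε`, where `λ₁ ≤ … ≤ λₙ` are the ordered eigenvalues.
(Here the matrix has total size `n+1`, so `n-1` of the statement corresponds to `n`.) -/
theorem stmt11 {n : ℕ} (hn : 1 ≤ n) (d : Fin n → ℝ) (a : Fin n → ℂ) (aa : ℝ)
    (hd : Monotone d)
    (hA : (arrowMatrix d a aa).IsHermitian)
    (lam : Fin (n + 1) → ℝ) (hmono : Monotone lam)
    (hperm : ∃ e : Equiv.Perm (Fin (n + 1)), ∀ k, lam k = hA.eigenvalues (e k))
    (ε : ℝ) (hε : 0 < ε)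
    (hεI : (∀ i j : Fin n, d i = d j) ∨ (∀ i j : Fin n, d i ≠ d j → ε < |d i - d j| / 2))
    (hgrow : aa ≥ (1 / ε) * ∑ i, ‖a i‖ ^ 2
        + (((n : ℝ) + 1) - 1) * ∑ i, |d i|
        + (((n : ℝ) + 1) - 2) * ε) :
    (∀ α : Fin n, |d α - lam α.castSucc| < ε) ∧
    0 ≤ lam (Fin.last n) - aa ∧
    lam (Fin.last n) - aa < (((n : ℝ) + 1) - 1) * ε := by
  simpa only [add_sub_cancel_right] using stmt11_general hn d a aa hd hA lam hmono hperm ε hε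
    (add_lt_add_of_add_mul_sum_abs_le hε (by linarith))
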